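/- Let G be a WCFG and A a WFSA over the same alphabet Σ and the same commutative semiring W, and let G∩ be the generalized Bar-Hillel grammar. For any nonterminal triplet (q0, X, qm) of G∩ with X ∈ N ∪ Σ (so X ≠ S̄) and q0, qm ∈ Q, there is a bijection ψ from the set D_{G∩}((q0,X,qm)) of subderivations of G∩ rooted at (q0,X,qm) to the weighted join D_G(X) ⋈ D_A({q0,qm}) restricted to pairs ⟨t, π⟩ in which the subpath π does not end with an ε-arc; moreover for ψ(t∩) = ⟨t, π⟩ one has w(t∩) = w(t) ⊗ w̃(π) and yield(t∩) = yield(t) = yield(π). -/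

import Mathlib

/-!
Common definitions: weighted context-free grammars (WCFGs), weighted
finite-state automata (WFSAs), leftmost derivations, paths and subpaths,
and the (generalized and original) Bar-Hillel intersection constructions.
-/

/-- A weighted production rule `X → α / w`. -/
structure Rule (T N K : Type*) where
  lhs : N
  rhs : List (T ⊕ N)
  wt  : K

/-- A weighted context-free grammar over terminals `T`, nonterminals `N`
and weights `K`. -/
structure WCFG (T N K : Type*) where
  start : N
  rules : Set (Rule T N K)

/-- A leftmost rewrite step `α ⇒_L β` using rule `r`: the leftmost
nonterminal of `α` (everything to its left is terminal) is rewritten by `r`. -/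
def StepL {T N K : Type*} (G : WCFG T N K) (r : Rule T N K)
    (α β : List (T ⊕ N)) : Prop :=
  r ∈ G.rules ∧ ∃ (z : List T) (δ : List (T ⊕ N)),
    α = (z.map Sum.inl) ++ (Sum.inr r.lhs :: δ) ∧
    β = (z.map Sum.inl) ++ r.rhs ++ δ

/-- `DerivesL G α rs x`: starting from sentential form `α` and applying the
rules `rs` by leftmost rewriting one reaches the terminal string `x`. -/
inductive DerivesL {T N K : Type*} (G : WCFG T N K) :
    List (T ⊕ N) → List (Rule T N K) → List T → Prop
  | refl (x : List T) : DerivesL G (x.map Sum.inl) [] x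
  | step {α β : List (T ⊕ N)} {r : Rule T N K} {rs : List (Rule T N K)}
      {x : List T} :
      StepL G r α β → DerivesL G β rs x → DerivesL G α (r :: rs) x

/-- A (sub)derivation of `G` starting from the sentential form `α`,
recorded as the sequence of applied rules together with its yield. -/
structure DerivFrom {T N K : Type*} (G : WCFG T N K) (α : List (T ⊕ N)) where
  rules : List (Rule T N K)
  yield : List T
  ok : DerivesL G α rules yield

/-- The weight of a derivation: the `⊗`-product of the weights of the
applied rules. -/
def DerivFrom.weight {T N K : Type*} [CommSemiring K] {G : WCFG T N K}
    {α : List (T ⊕ N)} (d : DerivFrom G α) : K :=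
  (d.rules.map Rule.wt).prod

/-- Derivations of `G` rooted at the nonterminal `X`.  (For `X = G.start`
these are exactly the derivations of `G`; note that at least one rule is
necessarily applied.) -/
abbrev Deriv {T N K : Type*} (G : WCFG T N K) (X : N) : Type _ :=
  DerivFrom G [Sum.inr X]

/-- A weighted arc `src --lab/wt--> dst`; `lab = none` represents an ε-arc. -/
structure Arc (T Q K : Type*) where
  src : Q
  lab : Option T
  wt  : K
  dst : Q

/-- A weighted finite-state automaton over terminals `T`, states `Q` and
weights `K`; `arcs` is a finite multiset of weighted arcs, and `init`/`final`
are the initial/final weight functions. -/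
structure WFSA (T Q K : Type*) where
  arcs : Multiset (Arc T Q K)
  init : Q → K
  final : Q → K

/-- `ChainFrom A p as q`: `as` is a sequence of arcs of `A` with matched
adjacent states, leading from state `p` to state `q`. -/
inductive ChainFrom {T Q K : Type*} (A : WFSA T Q K) :
    Q → List (Arc T Q K) → Q → Prop
  | nil (q : Q) : ChainFrom A q [] q
  | cons {a : Arc T Q K} {as : List (Arc T Q K)} {q : Q} :
      a ∈ A.arcs → ChainFrom A a.dst as q → ChainFrom A a.src (a :: as) q

/-- A subpath of `A` from state `p` to state `q` (possibly empty). -/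
structure SubPath {T Q K : Type*} (A : WFSA T Q K) (p q : Q) where
  arcs : List (Arc T Q K)
  ok : ChainFrom A p arcs q

/-- The yield of a subpath: the concatenation of its arc labels
(ε contributing nothing). -/
def SubPath.yield {T Q K : Type*} {A : WFSA T Q K} {p q : Q}
    (π : SubPath A p q) : List T :=
  π.arcs.filterMap Arc.lab

/-- The inner weight `w̃(π)` of a subpath: the `⊗`-product of its arc weights
(no initial/final weights; `1̄` if empty). -/
def SubPath.weight {T Q K : Type*} [CommSemiring K] {A : WFSA T Q K} {p q : Q}
    (π : SubPath A p q) : K :=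
  (π.arcs.map Arc.wt).prod

/-- An accepting path of `A`: a nonempty chained sequence of arcs starting at
an initial state (`init ≠ 0̄`) and ending at a final state (`final ≠ 0̄`). -/
structure FSAPath {T Q K : Type*} [Zero K] (A : WFSA T Q K) where
  src : Q
  dst : Q
  arcs : List (Arc T Q K)
  ne : arcs ≠ []
  chain : ChainFrom A src arcs dst
  src_init : A.init src ≠ 0
  dst_final : A.final dst ≠ 0

/-- The yield of a path: the concatenation of its arc labels. -/
def FSAPath.yield {T Q K : Type*} [Zero K] {A : WFSA T Q K} (π : FSAPath A) : List T :=
  π.arcs.filterMap Arc.lab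

/-- The weight of a path: `λ(q₀) ⊗ w₁ ⊗ ⋯ ⊗ w_N ⊗ ρ(q_N)`. -/
def FSAPath.weight {T Q K : Type*} [CommSemiring K] {A : WFSA T Q K}
    (π : FSAPath A) : K :=
  A.init π.src * (π.arcs.map Arc.wt).prod * A.final π.dst

/-- Middle symbols of Bar-Hillel triplet nonterminals: `N ∪ {S̄} ∪ Σ ∪ {ε}`. -/
inductive BHSym (T N : Type*) where
  | nt  : N → BHSym T N
  | bar : BHSym T N
  | term : T → BHSym T N
  | eps : BHSym T N

/-- Nonterminals of the Bar-Hillel grammar: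
`{S} ∪ Q × (N ∪ {S̄} ∪ Σ ∪ {ε}) × Q`. -/
inductive BHNT (T N Q : Type*) where
  | start : BHNT T N Q
  | trip : Q → BHSym T N → Q → BHNT T N Q

/-- View a grammar symbol (terminal or nonterminal) as a triplet middle
symbol. -/
def BHSym.ofSym {T N : Type*} : T ⊕ N → BHSym T N
  | Sum.inl a => BHSym.term a
  | Sum.inr X => BHSym.nt X

/-- View an arc label (`none` = ε) as a triplet middle symbol. -/
def BHSym.ofLab {T N : Type*} : Option T → BHSym T N
  | some a => BHSym.term a
  | none   => BHSym.eps

/-- The sentential form corresponding to the root symbol of a subderivation: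
a nonterminal root `X` gives `X`, a terminal root `a` gives `a`, and an
ε root gives the empty form. -/
def BHSym.form {T N : Type*} : BHSym T N → List (T ⊕ N)
  | BHSym.nt X => [Sum.inr X]
  | BHSym.term a => [Sum.inl a]
  | BHSym.eps => []
  | BHSym.bar => []

/-- Subderivations of `G` rooted at the symbol `s ∈ N ∪ Σ ∪ {ε}`:
for a nonterminal root at least one rule is applied; for a root in
`Σ ∪ {ε}` no rule is applied, the yield is the root symbol itself and the
weight is `1̄`. -/
abbrev SubDeriv {T N K : Type*} (G : WCFG T N K) (s : BHSym T N) : Type _ :=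
  DerivFrom G s.form

/-- `(q₀,X₁,q₁)(q₁,X₂,q₂)⋯(q_{M-1},X_M,q_M)` as a right-hand side of the
Bar-Hillel grammar, where the `Xᵢ` traverse `syms` and `q₁,…,q_M` traverse
`qs`. -/
def tripRHS {T N Q : Type*} : Q → List (T ⊕ N) → List Q → List (T ⊕ BHNT T N Q)
  | _, [], _ => []
  | _, _ :: _, [] => []
  | q0, s :: ss, q :: qs => Sum.inr (BHNT.trip q0 (BHSym.ofSym s) q) :: tripRHS q ss qs

section BarHillel

variable {T N Q K : Type*} [CommSemiring K]

/-- Rule schema (a): `S → (qI,S̄,qF) / λ(qI)⊗ρ(qF)` for `qI ∈ I`, `qF ∈ F`. -/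
def bhRulesStart (G : WCFG T N K) (A : WFSA T Q K) : Set (Rule T (BHNT T N Q) K) :=
  {r | ∃ qI qF : Q, A.init qI ≠ 0 ∧ A.final qF ≠ 0 ∧
    r = ⟨BHNT.start, [Sum.inr (BHNT.trip qI BHSym.bar qF)],
         A.init qI * A.final qF⟩}

/-- Rule schema (b): `(qI,S̄,q₁) → (qI,S̄,q₀)(q₀,ε,q₁) / 1̄` for `qI ∈ I`,
`q₀,q₁ ∈ Q`. -/
def bhRulesBar (G : WCFG T N K) (A : WFSA T Q K) : Set (Rule T (BHNT T N Q) K) :=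
  {r | ∃ qI q0 q1 : Q, A.init qI ≠ 0 ∧
    r = ⟨BHNT.trip qI BHSym.bar q1,
         [Sum.inr (BHNT.trip qI BHSym.bar q0), Sum.inr (BHNT.trip q0 BHSym.eps q1)],
         1⟩}

/-- Rule schema (c): `(qI,S̄,q₀) → (qI,S,q₀) / 1̄` for `qI ∈ I`, `q₀ ∈ Q`. -/
def bhRulesExit (G : WCFG T N K) (A : WFSA T Q K) : Set (Rule T (BHNT T N Q) K) :=
  {r | ∃ qI q0 : Q, A.init qI ≠ 0 ∧
    r = ⟨BHNT.trip qI BHSym.bar q0,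
         [Sum.inr (BHNT.trip qI (BHSym.nt G.start) q0)], 1⟩}

/-- Rule schema (d): `(q₀,X,q_M) → (q₀,X₁,q₁)⋯(q_{M-1},X_M,q_M) / w` for each
rule `X → X₁⋯X_M / w` of `G` with `M > 0` and all `q₀,…,q_M ∈ Q`. -/
def bhRulesCFG (G : WCFG T N K) (A : WFSA T Q K) : Set (Rule T (BHNT T N Q) K) :=
  {r | ∃ (r₀ : Rule T N K) (q0 : Q) (qs : List Q),
    r₀ ∈ G.rules ∧ r₀.rhs ≠ [] ∧ qs.length = r₀.rhs.length ∧
    r = ⟨BHNT.trip q0 (BHSym.nt r₀.lhs) (qs.getLastD q0),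
         tripRHS q0 r₀.rhs qs, r₀.wt⟩}

/-- Rule schema (e): `(q₀,X,q₀) → ε / w` for each rule `X → ε / w` of `G`
and `q₀ ∈ Q`. -/
def bhRulesNil (G : WCFG T N K) (A : WFSA T Q K) : Set (Rule T (BHNT T N Q) K) :=
  {r | ∃ (r₀ : Rule T N K) (q : Q), r₀ ∈ G.rules ∧ r₀.rhs = [] ∧
    r = ⟨BHNT.trip q (BHSym.nt r₀.lhs) q, [], r₀.wt⟩}

/-- Rule schema (f): `(q₀,a,q₁) → a / w` for each arc `q₀ --a/w--> q₁` of `A`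
with `a ∈ Σ ∪ {ε}`. -/
def bhRulesArc (G : WCFG T N K) (A : WFSA T Q K) : Set (Rule T (BHNT T N Q) K) :=
  {r | ∃ a : Arc T Q K, a ∈ A.arcs ∧
    r = ⟨BHNT.trip a.src (BHSym.ofLab a.lab) a.dst,
         a.lab.toList.map Sum.inl, a.wt⟩}

/-- Rule schema (g): `(q₀,a,q₂) → (q₀,ε,q₁)(q₁,a,q₂) / 1̄` for all `a ∈ Σ`
and `q₀,q₁,q₂ ∈ Q`. -/
def bhRulesArcEps (G : WCFG T N K) (A : WFSA T Q K) : Set (Rule T (BHNT T N Q) K) :=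
  {r | ∃ (t : T) (q0 q1 q2 : Q),
    r = ⟨BHNT.trip q0 (BHSym.term t) q2,
         [Sum.inr (BHNT.trip q0 BHSym.eps q1),
          Sum.inr (BHNT.trip q1 (BHSym.term t) q2)], 1⟩}

/-- The generalized Bar-Hillel intersection grammar `G∩` of a WCFG `G` and a
WFSA `A` (schemas (a)–(g)). -/
def BHGrammar (G : WCFG T N K) (A : WFSA T Q K) : WCFG T (BHNT T N Q) K :=
  ⟨BHNT.start,
    bhRulesStart G A ∪ bhRulesBar G A ∪ bhRulesExit G A ∪ bhRulesCFG G A ∪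
    bhRulesNil G A ∪ bhRulesArc G A ∪ bhRulesArcEps G A⟩

/-- Rule schema (a) of the original construction:
`S → (qI,S,qF) / λ(qI)⊗ρ(qF)` for `qI ∈ I`, `qF ∈ F`. -/
def obhRulesStart (G : WCFG T N K) (A : WFSA T Q K) : Set (Rule T (BHNT T N Q) K) :=
  {r | ∃ qI qF : Q, A.init qI ≠ 0 ∧ A.final qF ≠ 0 ∧
    r = ⟨BHNT.start, [Sum.inr (BHNT.trip qI (BHSym.nt G.start) qF)],
         A.init qI * A.final qF⟩}

/-- The original (Bar-Hillel / Nederhof–Satta) intersection grammar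
(schemas (a), (d), (e), (f)). -/
def OBHGrammar (G : WCFG T N K) (A : WFSA T Q K) : WCFG T (BHNT T N Q) K :=
  ⟨BHNT.start,
    obhRulesStart G A ∪ bhRulesCFG G A ∪ bhRulesNil G A ∪ bhRulesArc G A⟩

end BarHillel

/-!
A leftmost derivation works on its sentential form like a stack: a terminal on top is emitted, a
nonterminal on top is rewritten. In `G∩` the rule at a triplet `(q, X, p)` is a rule of `G`
annotated with states, and at a triplet `(q, a, p)` it either reads an `a`-arc or inserts an ε-arc
in front. Hence `ψ` just forgets: it keeps the rules coming from `G`, stripped of their states, and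
the arcs read. Conversely the top of the stack dictates how a derivation of `G` and a subpath of
equal yield are interleaved, because ε-arcs can only be read right before the next letter; nothing
would consume ε-arcs after the last letter, so the subpath must not end with one.
-/

section Derivations

variable {T N K : Type*} {G : WCFG T N K} {α : List (T ⊕ N)} {rs : List (Rule T N K)} {x : List T}

theorem derivesL_nil_iff : DerivesL G [] rs x ↔ rs = [] ∧ x = [] := by
  constructor
  · intro h
    generalize hα : [] = α at h
    cases h with
    | refl x => exact ⟨rfl, List.map_eq_nil_iff.1 hα.symm⟩
    | step hs _ =>
      obtain ⟨-, z, δ, hz, -⟩ := hs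
      simp [hz] at hα
  · rintro ⟨rfl, rfl⟩
    exact .refl []

theorem derivesL_cons_inl_iff {a : T} :
    DerivesL G (.inl a :: α) rs x ↔ ∃ y, x = a :: y ∧ DerivesL G α rs y := by
  constructor
  · intro h
    generalize hα : .inl a :: α = α' at h
    induction h generalizing α with
    | refl x =>
      obtain ⟨_, y, rfl, ⟨⟩, rfl⟩ := List.map_eq_cons_iff.1 hα.symm
      exact ⟨y, rfl, .refl y⟩
    | step hs _ ih =>
      obtain ⟨hr, _ | ⟨b, z⟩, δ, rfl, rfl⟩ := hs
      · simp at hα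
      · obtain ⟨⟨⟩, rfl⟩ := List.cons.inj hα
        obtain ⟨y, rfl, hy⟩ := ih rfl
        exact ⟨y, rfl, .step ⟨hr, z, δ, rfl, rfl⟩ hy⟩
  · rintro ⟨y, rfl, h⟩
    induction h with
    | refl y => exact .refl (a :: y)
    | step hs _ ih =>
      obtain ⟨hr, z, δ, rfl, rfl⟩ := hs
      exact .step ⟨hr, a :: z, δ, rfl, rfl⟩ ih

theorem derivesL_cons_inr_iff {X : N} :
    DerivesL G (.inr X :: α) rs x ↔
      ∃ r ∈ G.rules, r.lhs = X ∧ ∃ rs', rs = r :: rs' ∧ DerivesL G (r.rhs ++ α) rs' x := by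
  constructor
  · intro h
    generalize hα : .inr X :: α = α' at h
    cases h with
    | refl x => cases x <;> simp at hα
    | step hs h =>
      obtain ⟨hr, _ | ⟨b, z⟩, δ, rfl, rfl⟩ := hs
      · obtain ⟨⟨⟩, rfl⟩ := List.cons.inj hα
        exact ⟨_, hr, rfl, _, rfl, h⟩
      · simp at hα
  · rintro ⟨r, hr, rfl, rs', rfl, h⟩
    exact .step ⟨hr, [], α, rfl, rfl⟩ h

@[elab_as_elim]
theorem DerivesL.stack_induction {motive : ∀ α rs x, DerivesL G α rs x → Prop}
    (nil : motive [] [] [] (.refl []))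
    (inl : ∀ a α rs x h, motive α rs x h →
      motive (.inl a :: α) rs (a :: x) (derivesL_cons_inl_iff.2 ⟨x, rfl, h⟩))
    (inr : ∀ r α rs x hr h, motive (r.rhs ++ α) rs x h →
      motive (.inr r.lhs :: α) (r :: rs) x
        (derivesL_cons_inr_iff.2 ⟨r, hr, rfl, rs, rfl, h⟩))
    (h : DerivesL G α rs x) : motive α rs x h := by
  induction rs generalizing α x with
  | nil =>
    induction α generalizing x with
    | nil =>
      obtain ⟨-, rfl⟩ := derivesL_nil_iff.1 h
      exact nil
    | cons s α ih =>
      rcases s with a | X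
      · obtain ⟨y, rfl, hy⟩ := derivesL_cons_inl_iff.1 h
        exact inl a α _ y hy (ih hy)
      · simp [derivesL_cons_inr_iff] at h
  | cons r rs ihr =>
    induction α generalizing x with
    | nil => simp [derivesL_nil_iff] at h
    | cons s α ih =>
      rcases s with a | X
      · obtain ⟨y, rfl, hy⟩ := derivesL_cons_inl_iff.1 h
        exact inl a α _ y hy (ih hy)
      · obtain ⟨_, hr, rfl, _, ⟨⟩, hd⟩ := derivesL_cons_inr_iff.1 h
        exact inr r α rs x hr hd (ihr hd)

attribute [ext] DerivFrom SubPath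

end Derivations

section NotEpsEnding

variable {T Q K : Type*} {a : Arc T Q K} {π : List (Arc T Q K)}

/-- The restriction on subpaths in the weighted join: the last arc, if there is one, is not an
ε-arc. -/
def NotEpsEnding (π : List (Arc T Q K)) : Prop :=
  ¬ ∃ a : Arc T Q K, π.getLast? = some a ∧ a.lab = none

theorem notEpsEnding_nil : NotEpsEnding ([] : List (Arc T Q K)) := by
  simp [NotEpsEnding]

theorem notEpsEnding_cons_iff :
    NotEpsEnding (a :: π) ↔ NotEpsEnding π ∧ (π = [] → a.lab ≠ none) := by
  rcases π.eq_nil_or_concat with rfl | ⟨π, b, rfl⟩ <;> simp [NotEpsEnding, List.getLast?_cons]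

theorem NotEpsEnding.eq_nil (h : NotEpsEnding π) (hπ : π.filterMap Arc.lab = []) : π = [] := by
  induction π with
  | nil => rfl
  | cons a π ih =>
    obtain ⟨hπ', ha⟩ := notEpsEnding_cons_iff.1 h
    rw [List.filterMap_eq_nil_iff] at hπ
    refine absurd (hπ a (by simp)) (ha (ih hπ' ?_))
    exact List.filterMap_eq_nil_iff.2 fun b hb => hπ b (by simp [hb])

end NotEpsEnding

section BarHillelRules

variable {T N Q K : Type*} {Rs : List (Rule T (BHNT T N Q) K)}

/-- The rule of schemas (d) and (e) that annotates the rule `r` of `G` with the states `q` and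
`qs`. For `r.rhs = []` and `qs = []` it is the rule `(q,X,q) → ε` of schema (e). -/
def Rule.annotate (r : Rule T N K) (q : Q) (qs : List Q) : Rule T (BHNT T N Q) K :=
  ⟨.trip q (.nt r.lhs) (qs.getLastD q), tripRHS q r.rhs qs, r.wt⟩

/-- The rule of schema (f) that reads the arc `a`. -/
def Arc.toRule (N : Type*) (a : Arc T Q K) : Rule T (BHNT T N Q) K :=
  ⟨.trip a.src (.ofLab a.lab) a.dst, a.lab.toList.map .inl, a.wt⟩

/-- The rule `(q₀,t,q₂) → (q₀,ε,q₁)(q₁,t,q₂) / 1̄` of schema (g). -/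
def epsPrefixRule (N K : Type*) [One K] (t : T) (q₀ q₁ q₂ : Q) : Rule T (BHNT T N Q) K :=
  ⟨.trip q₀ (.term t) q₂, [.inr (.trip q₀ .eps q₁), .inr (.trip q₁ (.term t) q₂)], 1⟩

/-- The grammar symbol in the middle of a triplet, if it lies in `N ∪ Σ`. -/
def BHNT.sym? : BHNT T N Q → Option (T ⊕ N)
  | .trip _ (.nt X) _ => some (.inr X)
  | .trip _ (.term a) _ => some (.inl a)
  | _ => none

/-- The rule of `G` annotated by a Bar-Hillel rule of schema (d) or (e). -/
def Rule.base? : Rule T (BHNT T N Q) K → Option (Rule T N K)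
  | ⟨.trip _ (.nt X) _, β, w⟩ => some ⟨X, β.filterMap (Sum.elim (fun _ => none) BHNT.sym?), w⟩
  | _ => none

/-- The arc of `A` read by a Bar-Hillel rule of schema (f). Schemas (f) and (g) share the left-hand
sides `(q₀,a,q₁)` with `a ∈ Σ`; only in (f) is the right-hand side a terminal. -/
def Rule.arc? : Rule T (BHNT T N Q) K → Option (Arc T Q K)
  | ⟨.trip q .eps p, _, w⟩ => some ⟨q, none, w, p⟩
  | ⟨.trip q (.term t) p, [.inl _], w⟩ => some ⟨q, some t, w, p⟩
  | _ => none

/-- The rules of `G` underlying a list of Bar-Hillel rules; for a subderivation of `G∩` this is the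
first component of `ψ`. -/
def baseRules (Rs : List (Rule T (BHNT T N Q) K)) : List (Rule T N K) :=
  Rs.filterMap Rule.base?

/-- The arcs of `A` read by a list of Bar-Hillel rules; for a subderivation of `G∩` this is the
second component of `ψ`. -/
def readArcs (Rs : List (Rule T (BHNT T N Q) K)) : List (Arc T Q K) :=
  Rs.filterMap Rule.arc?

@[simp]
theorem wt_annotate (r : Rule T N K) (q : Q) (qs : List Q) : (r.annotate q qs).wt = r.wt :=
  rfl

@[simp]
theorem wt_toRule (a : Arc T Q K) : (a.toRule N).wt = a.wt :=
  rfl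

@[simp]
theorem wt_epsPrefixRule [One K] (t : T) (q₀ q₁ q₂ : Q) :
    (epsPrefixRule N K t q₀ q₁ q₂).wt = 1 :=
  rfl

theorem form_ofSym (s : T ⊕ N) : (BHSym.ofSym s).form = [s] := by
  cases s <;> rfl

theorem getLastD_append {α : Type*} (l m : List α) (a : α) :
    (l ++ m).getLastD a = m.getLastD (l.getLastD a) := by
  simp

theorem tripRHS_append {q : Q} {α β : List (T ⊕ N)} {qs ps : List Q}
    (hl : qs.length = α.length) :
    tripRHS q (α ++ β) (qs ++ ps) = tripRHS q α qs ++ tripRHS (qs.getLastD q) β ps := by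
  induction α generalizing q qs with
  | nil =>
    obtain rfl := List.length_eq_zero_iff.1 hl
    rfl
  | cons s α ih =>
    obtain ⟨p, qs, rfl⟩ := List.exists_cons_of_length_eq_add_one hl
    simp only [List.cons_append, tripRHS, List.getLastD_cons, ih (Nat.succ_injective hl)]

theorem filterMap_sym?_tripRHS {q : Q} {α : List (T ⊕ N)} {qs : List Q}
    (hl : qs.length = α.length) :
    (tripRHS q α qs).filterMap (Sum.elim (fun _ => none) BHNT.sym?) = α := by
  induction α generalizing q qs with
  | nil => rfl
  | cons s α ih =>
    obtain ⟨p, qs, rfl⟩ := List.exists_cons_of_length_eq_add_one hl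
    cases s <;> simp [tripRHS, BHSym.ofSym, BHNT.sym?, ih (Nat.succ_injective hl)]

@[simp]
theorem baseRules_nil : baseRules ([] : List (Rule T (BHNT T N Q) K)) = [] :=
  rfl

theorem baseRules_annotate_cons {X : N} {β : List (T ⊕ N)} {w : K} {q : Q} {qs : List Q}
    (hl : qs.length = β.length) :
    baseRules (Rule.annotate ⟨X, β, w⟩ q qs :: Rs) = ⟨X, β, w⟩ :: baseRules Rs :=
  List.filterMap_cons_some (by simp [Rule.annotate, Rule.base?, filterMap_sym?_tripRHS hl])

@[simp]
theorem baseRules_toRule_cons (a : Arc T Q K) : baseRules (a.toRule N :: Rs) = baseRules Rs := by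
  rcases a with ⟨_, _ | _, _, _⟩ <;> rfl

@[simp]
theorem baseRules_epsPrefixRule_cons [One K] (t : T) (q₀ q₁ q₂ : Q) :
    baseRules (epsPrefixRule N K t q₀ q₁ q₂ :: Rs) = baseRules Rs :=
  rfl

@[simp]
theorem readArcs_nil : readArcs ([] : List (Rule T (BHNT T N Q) K)) = [] :=
  rfl

@[simp]
theorem readArcs_annotate_cons (r : Rule T N K) (q : Q) (qs : List Q) :
    readArcs (r.annotate q qs :: Rs) = readArcs Rs :=
  rfl

@[simp]
theorem readArcs_toRule_cons (a : Arc T Q K) : readArcs (a.toRule N :: Rs) = a :: readArcs Rs := by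
  rcases a with ⟨_, _ | _, _, _⟩ <;> rfl

@[simp]
theorem readArcs_epsPrefixRule_cons [One K] (t : T) (q₀ q₁ q₂ : Q) :
    readArcs (epsPrefixRule N K t q₀ q₁ q₂ :: Rs) = readArcs Rs :=
  rfl

end BarHillelRules

section BarHillelGrammar

variable {T N Q K : Type*} [CommSemiring K] {G : WCFG T N K} {A : WFSA T Q K}

theorem mem_rules_bhGrammar_iff {R : Rule T (BHNT T N Q) K} :
    R ∈ (BHGrammar G A).rules ↔
      R ∈ bhRulesStart G A ∪ bhRulesBar G A ∪ bhRulesExit G A ∨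
      (∃ r ∈ G.rules, ∃ q qs, qs.length = r.rhs.length ∧ R = r.annotate q qs) ∨
      (∃ a ∈ A.arcs, R = a.toRule N) ∨ ∃ t q₀ q₁ q₂, R = epsPrefixRule N K t q₀ q₁ q₂ := by
  constructor
  · rintro (((((h | ⟨r, q, qs, hr, -, hl, rfl⟩) | ⟨r, q, hr, hn, rfl⟩) | ⟨a, ha, rfl⟩) | h))
    · exact .inl h
    · exact .inr (.inl ⟨r, hr, q, qs, hl, rfl⟩)
    · exact .inr (.inl ⟨r, hr, q, [], by simp [hn], by simp [Rule.annotate, hn, tripRHS]⟩)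
    · exact .inr (.inr (.inl ⟨a, ha, rfl⟩))
    · exact .inr (.inr (.inr h))
  · rintro (h | ⟨r, hr, q, qs, hl, rfl⟩ | ⟨a, ha, rfl⟩ | h)
    · exact .inl (.inl (.inl (.inl h)))
    · by_cases hn : r.rhs = []
      · obtain rfl : qs = [] := by simpa [hn] using hl
        exact .inl (.inl (.inr ⟨r, q, hr, hn, by simp [Rule.annotate, hn, tripRHS]⟩))
      · exact .inl (.inl (.inl (.inr ⟨r, q, qs, hr, hn, hl, rfl⟩)))
    · exact .inl (.inr ⟨a, ha, rfl⟩)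
    · exact .inr h

theorem lhs_of_mem_rulesStart_union_rulesBar_union_rulesExit {R : Rule T (BHNT T N Q) K}
    (hR : R ∈ bhRulesStart G A ∪ bhRulesBar G A ∪ bhRulesExit G A) :
    R.lhs = .start ∨ ∃ q p, R.lhs = .trip q .bar p := by
  rcases hR with (⟨_, _, _, _, rfl⟩ | ⟨qI, _, q₁, _, rfl⟩) | ⟨qI, q₀, _, rfl⟩
  · exact .inl rfl
  · exact .inr ⟨qI, q₁, rfl⟩
  · exact .inr ⟨qI, q₀, rfl⟩

theorem mem_rules_bhGrammar_and_lhs_eq_nt_iff {R : Rule T (BHNT T N Q) K} {q p : Q} {X : N} :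
    R ∈ (BHGrammar G A).rules ∧ R.lhs = .trip q (.nt X) p ↔
      ∃ β w ps, ⟨X, β, w⟩ ∈ G.rules ∧ ps.length = β.length ∧ ps.getLastD q = p ∧
        R = Rule.annotate ⟨X, β, w⟩ q ps := by
  rw [mem_rules_bhGrammar_iff]
  constructor
  · rintro ⟨h | ⟨⟨_, β, w⟩, hr, _, ps, hl, rfl⟩ | ⟨⟨_, _ | _, _, _⟩, _, rfl⟩ | ⟨_, _, _, _, rfl⟩,
      hX⟩
    · rcases lhs_of_mem_rulesStart_union_rulesBar_union_rulesExit h with h | ⟨_, _, h⟩ <;>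
        simp [h] at hX
    · obtain ⟨⟩ := hX
      exact ⟨β, w, ps, hr, hl, rfl, rfl⟩
    all_goals cases hX
  · rintro ⟨β, w, ps, hr, hl, rfl, rfl⟩
    exact ⟨.inr (.inl ⟨_, hr, q, ps, hl, rfl⟩), rfl⟩

theorem mem_rules_bhGrammar_and_lhs_eq_eps_iff {R : Rule T (BHNT T N Q) K} {q p : Q} :
    R ∈ (BHGrammar G A).rules ∧ R.lhs = .trip q .eps p ↔
      ∃ w, ⟨q, none, w, p⟩ ∈ A.arcs ∧ R = Arc.toRule N ⟨q, none, w, p⟩ := by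
  rw [mem_rules_bhGrammar_iff]
  constructor
  · rintro ⟨h | ⟨_, _, _, _, _, rfl⟩ | ⟨⟨_, _ | _, w, _⟩, ha, rfl⟩ | ⟨_, _, _, _, rfl⟩, hX⟩
    · rcases lhs_of_mem_rulesStart_union_rulesBar_union_rulesExit h with h | ⟨_, _, h⟩ <;>
        simp [h] at hX
    · cases hX
    · obtain ⟨⟩ := hX
      exact ⟨w, ha, rfl⟩
    all_goals cases hX
  · rintro ⟨w, ha, rfl⟩
    exact ⟨.inr (.inr (.inl ⟨_, ha, rfl⟩)), rfl⟩

theorem mem_rules_bhGrammar_and_lhs_eq_term_iff {R : Rule T (BHNT T N Q) K} {q p : Q} {t : T} :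
    R ∈ (BHGrammar G A).rules ∧ R.lhs = .trip q (.term t) p ↔
      (∃ w, ⟨q, some t, w, p⟩ ∈ A.arcs ∧ R = Arc.toRule N ⟨q, some t, w, p⟩) ∨
      ∃ q', R = epsPrefixRule N K t q q' p := by
  rw [mem_rules_bhGrammar_iff]
  constructor
  · rintro ⟨h | ⟨_, _, _, _, _, rfl⟩ | ⟨⟨_, _ | _, w, _⟩, ha, rfl⟩ | ⟨_, _, q', _, rfl⟩, hX⟩
    · rcases lhs_of_mem_rulesStart_union_rulesBar_union_rulesExit h with h | ⟨_, _, h⟩ <;>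
        simp [h] at hX
    · cases hX
    · cases hX
    · obtain ⟨⟩ := hX
      exact .inl ⟨w, ha, rfl⟩
    · obtain ⟨⟩ := hX
      exact .inr ⟨q', rfl⟩
  · rintro (⟨w, ha, rfl⟩ | ⟨q', rfl⟩)
    · exact ⟨.inr (.inr (.inl ⟨_, ha, rfl⟩)), rfl⟩
    · exact ⟨.inr (.inr (.inr ⟨t, q, q', p, rfl⟩)), rfl⟩

end BarHillelGrammar

section TripletDerives

variable {T N Q K : Type*}

/-- `TripletDerives G A q α qs Rs x`: the rules `Rs` of `G∩` derive `x` from the sentential form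
`tripRHS q α qs`, in the big-step form in which an ε-arc is read as soon as schema (g) inserts it.
Every sentential form reached is then again of the form `tripRHS`. -/
inductive TripletDerives [One K] (G : WCFG T N K) (A : WFSA T Q K) :
    Q → List (T ⊕ N) → List Q → List (Rule T (BHNT T N Q) K) → List T → Prop
  | nil {q} : TripletDerives G A q [] [] [] []
  | nt {q X β w α ps qs Rs x} : ⟨X, β, w⟩ ∈ G.rules → ps.length = β.length →
      TripletDerives G A q (β ++ α) (ps ++ qs) Rs x →
      TripletDerives G A q (.inr X :: α) (ps.getLastD q :: qs)
        (Rule.annotate ⟨X, β, w⟩ q ps :: Rs) x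
  | eps {q q' p t w α qs Rs x} : ⟨q, none, w, q'⟩ ∈ A.arcs →
      TripletDerives G A q' (.inl t :: α) (p :: qs) Rs x →
      TripletDerives G A q (.inl t :: α) (p :: qs)
        (epsPrefixRule N K t q q' p :: Arc.toRule N ⟨q, none, w, q'⟩ :: Rs) x
  | term {q p t w α qs Rs x} : ⟨q, some t, w, p⟩ ∈ A.arcs →
      TripletDerives G A p α qs Rs x →
      TripletDerives G A q (.inl t :: α) (p :: qs) (Arc.toRule N ⟨q, some t, w, p⟩ :: Rs) (t :: x)

namespace TripletDerives

section One

variable [One K] {G : WCFG T N K} {A : WFSA T Q K} {q : Q} {α : List (T ⊕ N)} {qs qs' : List Q}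
  {Rs Rs' : List (Rule T (BHNT T N Q) K)} {x x' : List T}

theorem length_eq (h : TripletDerives G A q α qs Rs x) : qs.length = α.length := by
  induction h with
  | nil => rfl
  | nt _ hl _ ih => simpa [hl] using ih
  | eps _ _ ih => exact ih
  | term _ _ ih => simpa using ih

theorem derivesL_baseRules (h : TripletDerives G A q α qs Rs x) :
    DerivesL G α (baseRules Rs) x := by
  induction h with
  | nil => exact .refl []
  | nt hr hl _ ih =>
    rw [baseRules_annotate_cons hl]
    exact derivesL_cons_inr_iff.2 ⟨_, hr, rfl, _, rfl, ih⟩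
  | eps _ _ ih => simpa using ih
  | term _ _ ih => simpa [derivesL_cons_inl_iff] using ih

theorem chainFrom_readArcs (h : TripletDerives G A q α qs Rs x) :
    ChainFrom A q (readArcs Rs) (qs.getLastD q) := by
  induction h with
  | nil => exact .nil _
  | nt _ _ _ ih =>
    rw [getLastD_append] at ih
    rwa [List.getLastD_cons, readArcs_annotate_cons]
  | eps ha _ ih =>
    rw [List.getLastD_cons] at ih ⊢
    simpa using ChainFrom.cons ha ih
  | term ha _ ih =>
    rw [List.getLastD_cons]
    simpa using ChainFrom.cons ha ih

theorem filterMap_lab_readArcs (h : TripletDerives G A q α qs Rs x) :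
    (readArcs Rs).filterMap Arc.lab = x := by
  induction h with
  | nil => rfl
  | nt _ _ _ ih => simpa using ih
  | eps _ _ ih => simpa using ih
  | term _ _ ih => simpa using ih

theorem exists_yield_eq_cons {t : T} (h : TripletDerives G A q (.inl t :: α) qs Rs x) :
    ∃ y, x = t :: y :=
  (derivesL_cons_inl_iff.1 h.derivesL_baseRules).imp fun _ hy => hy.1

theorem notEpsEnding_readArcs (h : TripletDerives G A q α qs Rs x) :
    NotEpsEnding (readArcs Rs) := by
  induction h with
  | nil => exact notEpsEnding_nil
  | nt _ _ _ ih => simpa using ih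
  | eps _ h ih =>
    obtain ⟨y, rfl⟩ := h.exists_yield_eq_cons
    have harcs := h.filterMap_lab_readArcs
    simp only [readArcs_epsPrefixRule_cons, readArcs_toRule_cons, notEpsEnding_cons_iff]
    exact ⟨ih, fun hnil => by simp [hnil] at harcs⟩
  | term _ _ ih => simpa [notEpsEnding_cons_iff] using ih

theorem eq_of_baseRules_eq_of_readArcs_eq (h : TripletDerives G A q α qs Rs x)
    (h' : TripletDerives G A q α qs' Rs' x')
    (hbase : baseRules Rs = baseRules Rs')
    (harcs : readArcs Rs = readArcs Rs') : qs = qs' ∧ Rs = Rs' := by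
  induction h generalizing qs' Rs' x' with
  | nil =>
    cases h'
    exact ⟨rfl, rfl⟩
  | nt _ hl _ ih =>
    cases h' with
    | nt _ hl' h' =>
      simp only [baseRules_annotate_cons hl, baseRules_annotate_cons hl', readArcs_annotate_cons,
        List.cons.injEq, Rule.mk.injEq, true_and] at hbase harcs
      obtain ⟨⟨rfl, rfl⟩, hbase⟩ := hbase
      obtain ⟨hqs, rfl⟩ := ih h' hbase harcs
      obtain ⟨rfl, rfl⟩ := List.append_inj hqs (hl.trans hl'.symm)
      exact ⟨rfl, rfl⟩
  | eps _ _ ih =>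
    cases h' with
    | eps _ h' =>
      simp only [baseRules_epsPrefixRule_cons, baseRules_toRule_cons, readArcs_epsPrefixRule_cons,
        readArcs_toRule_cons, List.cons.injEq, Arc.mk.injEq, true_and] at hbase harcs
      obtain ⟨⟨rfl, rfl⟩, harcs⟩ := harcs
      obtain ⟨hqs, rfl⟩ := ih h' hbase harcs
      obtain ⟨rfl, rfl⟩ := List.cons.inj hqs
      exact ⟨rfl, rfl⟩
    | term => simp at harcs
  | term _ _ ih =>
    cases h' with
    | eps => simp at harcs
    | term _ h' =>
      simp only [baseRules_toRule_cons, readArcs_toRule_cons, List.cons.injEq, Arc.mk.injEq,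
        true_and] at hbase harcs
      obtain ⟨⟨rfl, rfl⟩, harcs⟩ := harcs
      obtain ⟨rfl, rfl⟩ := ih h' hbase harcs
      exact ⟨rfl, rfl⟩

theorem exists_of_inl_cons {t : T} {rs : List (Rule T N K)} {π : List (Arc T Q K)} {p : Q}
    (hα : ∀ q' π', ChainFrom A q' π' p → π'.filterMap Arc.lab = x → NotEpsEnding π' →
      ∃ qs Rs, TripletDerives G A q' α qs Rs x ∧ qs.getLastD q' = p ∧
        baseRules Rs = rs ∧ readArcs Rs = π')
    (hπ : ChainFrom A q π p) (hx : π.filterMap Arc.lab = t :: x) (hne : NotEpsEnding π) :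
    ∃ qs Rs, TripletDerives G A q (.inl t :: α) qs Rs (t :: x) ∧ qs.getLastD q = p ∧
      baseRules Rs = rs ∧ readArcs Rs = π := by
  induction hπ with
  | nil => simp at hx
  | @cons a π p ha hπ ih =>
    obtain ⟨hne', -⟩ := notEpsEnding_cons_iff.1 hne
    obtain ⟨q, _ | t', w, q'⟩ := a
    · obtain ⟨qs, Rs, h, rfl, rfl, rfl⟩ := ih hα hx hne'
      obtain ⟨p, qs, rfl⟩ := List.exists_cons_of_length_eq_add_one h.length_eq
      exact ⟨_, _, .eps ha h, by simp only [List.getLastD_cons], by simp, by simp⟩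
    · obtain ⟨rfl, hx'⟩ := List.cons.inj hx
      obtain ⟨qs, Rs, h, rfl, rfl, rfl⟩ := hα q' π hπ hx' hne'
      exact ⟨_, _, .term ha h, List.getLastD_cons, by simp, by simp⟩

theorem exists_of_derivesL_of_chainFrom {rs : List (Rule T N K)} {π : List (Arc T Q K)} {p : Q}
    (h : DerivesL G α rs x) (hπ : ChainFrom A q π p) (hx : π.filterMap Arc.lab = x)
    (hne : NotEpsEnding π) :
    ∃ qs Rs, TripletDerives G A q α qs Rs x ∧ qs.getLastD q = p ∧
      baseRules Rs = rs ∧ readArcs Rs = π := by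
  induction h using DerivesL.stack_induction generalizing q π with
  | nil =>
    obtain rfl := hne.eq_nil hx
    cases hπ
    exact ⟨[], [], .nil, rfl, rfl, rfl⟩
  | inl t α rs x _ ih => exact exists_of_inl_cons (fun _ _ => ih) hπ hx hne
  | inr r α rs x hr _ ih =>
    obtain ⟨X, β, w⟩ := r
    obtain ⟨qs, Rs, h, rfl, rfl, rfl⟩ := ih hπ hx hne
    obtain ⟨ps, qs, rfl, hps⟩ : ∃ ps qs', qs = ps ++ qs' ∧ ps.length = β.length :=
      ⟨_, _, (List.take_append_drop β.length qs).symm, by simp [h.length_eq]⟩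
    exact ⟨_, _, .nt hr hps h, by rw [List.getLastD_cons, getLastD_append],
      baseRules_annotate_cons hps, readArcs_annotate_cons ..⟩

end One

theorem prod_wt [CommMonoid K] {G : WCFG T N K} {A : WFSA T Q K} {q : Q} {α : List (T ⊕ N)}
    {qs : List Q} {Rs : List (Rule T (BHNT T N Q) K)} {x : List T}
    (h : TripletDerives G A q α qs Rs x) :
    (Rs.map Rule.wt).prod =
      ((baseRules Rs).map Rule.wt).prod * ((readArcs Rs).map Arc.wt).prod := by
  induction h with
  | nil => simp
  | nt _ hl _ ih => simp [baseRules_annotate_cons hl, ih, mul_assoc]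
  | eps _ _ ih => simp [ih, mul_left_comm]
  | term _ _ ih => simp [ih, mul_left_comm]

end TripletDerives

variable [CommSemiring K] {G : WCFG T N K} {A : WFSA T Q K} {q : Q} {α : List (T ⊕ N)}
  {qs : List Q} {Rs : List (Rule T (BHNT T N Q) K)} {x : List T}

theorem TripletDerives.derivesL_bhGrammar (h : TripletDerives G A q α qs Rs x) :
    DerivesL (BHGrammar G A) (tripRHS q α qs) Rs x := by
  induction h with
  | nil => exact .refl []
  | nt hr hl _ ih =>
    rw [tripRHS_append hl] at ih
    obtain ⟨hR, hX⟩ := mem_rules_bhGrammar_and_lhs_eq_nt_iff (A := A) |>.2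
      ⟨_, _, _, hr, hl, rfl, rfl⟩
    exact derivesL_cons_inr_iff.2 ⟨_, hR, hX, _, rfl, ih⟩
  | @eps _ q' _ _ _ _ _ _ _ ha _ ih =>
    obtain ⟨hR, hX⟩ := mem_rules_bhGrammar_and_lhs_eq_term_iff (G := G) (A := A) |>.2
      (.inr ⟨q', rfl⟩)
    obtain ⟨hR', hX'⟩ := mem_rules_bhGrammar_and_lhs_eq_eps_iff (G := G) |>.2 ⟨_, ha, rfl⟩
    exact derivesL_cons_inr_iff.2 ⟨_, hR, hX, _, rfl,
      derivesL_cons_inr_iff.2 ⟨_, hR', hX', _, rfl, ih⟩⟩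
  | term ha _ ih =>
    obtain ⟨hR, hX⟩ := mem_rules_bhGrammar_and_lhs_eq_term_iff (G := G) |>.2
      (.inl ⟨_, ha, rfl⟩)
    exact derivesL_cons_inr_iff.2 ⟨_, hR, hX, _, rfl,
      derivesL_cons_inl_iff.2 ⟨_, rfl, ih⟩⟩

theorem tripletDerives_of_derivesL_bhGrammar (hl : qs.length = α.length)
    (h : DerivesL (BHGrammar G A) (tripRHS q α qs) Rs x) : TripletDerives G A q α qs Rs x := by
  induction hn : Rs.length using Nat.strong_induction_on generalizing q α qs Rs x with
  | _ n ih =>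
    subst hn
    rcases α with _ | ⟨t | X, α⟩
    · obtain rfl := List.length_eq_zero_iff.1 hl
      obtain ⟨rfl, rfl⟩ := derivesL_nil_iff.1 h
      exact .nil
    all_goals
      obtain ⟨p, qs, rfl⟩ := List.exists_cons_of_length_eq_add_one hl
      obtain ⟨R, hR, hX, Rs, rfl, hd⟩ := derivesL_cons_inr_iff.1 h
    · rcases mem_rules_bhGrammar_and_lhs_eq_term_iff.1 ⟨hR, hX⟩ with ⟨w, ha, rfl⟩ | ⟨q', rfl⟩
      · obtain ⟨y, rfl, hy⟩ := derivesL_cons_inl_iff.1 hd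
        exact .term ha (ih _ (by simp) (Nat.succ_injective hl) hy rfl)
      · obtain ⟨R', hR', hX', Rs', rfl, hd'⟩ := derivesL_cons_inr_iff.1 hd
        obtain ⟨w, ha, rfl⟩ := mem_rules_bhGrammar_and_lhs_eq_eps_iff.1 ⟨hR', hX'⟩
        exact .eps ha (ih _ (by simp) (α := .inl t :: α) hl hd' rfl)
    · obtain ⟨β, w, ps, hr, hps, rfl, rfl⟩ := mem_rules_bhGrammar_and_lhs_eq_nt_iff.1 ⟨hR, hX⟩
      refine .nt hr hps (ih _ (by simp) ?_ ?_ rfl)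
      · simpa [hps] using hl
      · rwa [tripRHS_append hps]

end TripletDerives

theorem bar_hillel_triplet_bijection_general {T N Q K : Type*} [CommSemiring K]
    (G : WCFG T N K) (A : WFSA T Q K) (q0 qm : Q) (X : BHSym T N)
    (hX : (∃ Y, X = BHSym.nt Y) ∨ (∃ a, X = BHSym.term a)) :
    ∃ ψ : Deriv (BHGrammar G A) (BHNT.trip q0 X qm) →
        {p : SubDeriv G X × SubPath A q0 qm //
          p.1.yield = p.2.yield ∧
          ¬ ∃ a : Arc T Q K, p.2.arcs.getLast? = some a ∧ a.lab = none},
      Function.Bijective ψ ∧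
      ∀ d, (ψ d).1.1.yield = d.yield ∧ (ψ d).1.2.yield = d.yield ∧
        d.weight = (ψ d).1.1.weight * (ψ d).1.2.weight := by
  obtain ⟨s, rfl⟩ : ∃ s : T ⊕ N, X = .ofSym s := by
    rcases hX with ⟨Y, rfl⟩ | ⟨a, rfl⟩
    exacts [⟨.inr Y, rfl⟩, ⟨.inl a, rfl⟩]
  have htrip (d : Deriv (BHGrammar G A) (.trip q0 (.ofSym s) qm)) :
      TripletDerives G A q0 [s] [qm] d.rules d.yield :=
    tripletDerives_of_derivesL_bhGrammar rfl d.ok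
  refine ⟨fun d =>
    ⟨(⟨baseRules d.rules, d.yield, form_ofSym s ▸ (htrip d).derivesL_baseRules⟩,
      ⟨readArcs d.rules, (htrip d).chainFrom_readArcs⟩),
      (htrip d).filterMap_lab_readArcs.symm, (htrip d).notEpsEnding_readArcs⟩,
    ⟨fun d d' h => ?_, fun ⟨(t, π), hy, hne⟩ => ?_⟩,
    fun d => ⟨rfl, (htrip d).filterMap_lab_readArcs, (htrip d).prod_wt⟩⟩
  · obtain ⟨ht, hπ⟩ := Prod.ext_iff.1 (Subtype.ext_iff.1 h)
    obtain ⟨hrules, hyield⟩ := DerivFrom.ext_iff.1 ht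
    exact DerivFrom.ext ((htrip d).eq_of_baseRules_eq_of_readArcs_eq (htrip d') hrules
      (SubPath.ext_iff.1 hπ)).2 hyield
  · have ht : DerivesL G [s] t.rules t.yield := form_ofSym s ▸ t.ok
    obtain ⟨qs, Rs, h, hq, hrules, harcs⟩ :=
      TripletDerives.exists_of_derivesL_of_chainFrom ht π.ok hy.symm hne
    obtain ⟨q, rfl⟩ := List.length_eq_one_iff.1 h.length_eq
    obtain rfl : q = qm := hq
    exact ⟨⟨Rs, t.yield, h.derivesL_bhGrammar⟩,
      Subtype.ext (Prod.ext (DerivFrom.ext hrules rfl) (SubPath.ext harcs))⟩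

/-- **Lemma B.1.**  For any triplet nonterminal `(q₀, X, q_m)` of the
generalized Bar-Hillel grammar `G∩` with `X ∈ N ∪ Σ` (so in particular
`X ≠ S̄`), there is a bijection `ψ` from the subderivations of `G∩` rooted at
`(q₀, X, q_m)` to the weighted join of the subderivations of `G` rooted at `X`
with the subpaths of `A` from `q₀` to `q_m`, restricted to pairs whose subpath
does not end with an ε-arc; `ψ` preserves yields, and the weight of a
subderivation of `G∩` is the `⊗`-product of the weights of the corresponding
subderivation and subpath. -/
theorem bar_hillel_triplet_bijection
    {T N Q K : Type*} [CommSemiring K] [Finite N] [Finite Q]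
    (G : WCFG T N K) (A : WFSA T Q K) (hGfin : G.rules.Finite)
    (q0 qm : Q) (X : BHSym T N)
    (hX : (∃ Y, X = BHSym.nt Y) ∨ (∃ a, X = BHSym.term a)) :
    ∃ ψ : Deriv (BHGrammar G A) (BHNT.trip q0 X qm) →
        {p : SubDeriv G X × SubPath A q0 qm //
          p.1.yield = p.2.yield ∧
          ¬ ∃ a : Arc T Q K, p.2.arcs.getLast? = some a ∧ a.lab = none},
      Function.Bijective ψ ∧
      ∀ d, (ψ d).1.1.yield = d.yield ∧ (ψ d).1.2.yield = d.yield ∧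
        d.weight = (ψ d).1.1.weight * (ψ d).1.2.weight :=
  bar_hillel_triplet_bijection_general G A q0 qm X hX
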